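/- arXiv:0905.2557 — 2 statements merged into one kernel-verified Lean document; each statement's English description precedes it below -/
import Mathlib

section
/- Let λ be a partition of length l (λ_1 ≥ … ≥ λ_l > 0), let λ′ be its conjugate, and let r = #{i : λ_i ≥ i} be the number of diagonal boxes. Then the two sets {k − λ_k − 1 : k = r+1, …, l} and {λ′_j − j : j = 1, …, r} are disjoint and their union equals {0, 1, 2, …, l − 1}. -/
/-!
For `1 ≤ k ≤ l`, the box `(k, j)` lies in the diagram iff `j ≤ λ_k` iff `k ≤ λ'_j`. If it does,
then `k - λ_k - 1 < λ'_j - j`; otherwise `k - λ_k - 1 > λ'_j - j`. So the two sets are disjoint.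
Both sequences are strictly monotone, so the sets have `l - r` and `r` elements, and since they lie
in `{0, …, l - 1}` they fill it.
-/

open Finset

/-- The part `λ'_j` of the conjugate of the partition `lam 1 ≥ ⋯ ≥ lam l`. The values of `lam`
outside `{1, …, l}` are ignored. -/
def conjPart (l : ℕ) (lam : ℕ → ℕ) (j : ℕ) : ℕ := #{i ∈ Icc 1 l | j ≤ lam i}

/-- The number `r` of boxes on the main diagonal of the diagram of `lam 1 ≥ ⋯ ≥ lam l`. -/
def diagCount (l : ℕ) (lam : ℕ → ℕ) : ℕ := #{i ∈ Icc 1 l | i ≤ lam i}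

/-- The number of empty positions between the end of row `k` and the diagonal position `(k, k)`.
It is integer-valued, and negative when row `k` reaches the diagonal. -/
def diagGap (lam : ℕ → ℕ) (k : ℕ) : ℤ := k - lam k - 1

/-- The leg length of the diagonal box `(j, j)`: the number of boxes below it in column `j`.
It is integer-valued, and negative when `(j, j)` is not in the diagram. -/
def diagLeg (l : ℕ) (lam : ℕ → ℕ) (j : ℕ) : ℤ := conjPart l lam j - j

theorem le_card_filter_Icc_iff {l k : ℕ} {P : ℕ → Prop} [DecidablePred P]
    (hP : AntitoneOn P (Set.Icc 1 l)) (hk : k ∈ Set.Icc 1 l) :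
    k ≤ #{i ∈ Icc 1 l | P i} ↔ P k := by
  constructor
  · contrapose!
    intro hPk
    have hsub : {i ∈ Icc 1 l | P i} ⊆ Ico 1 k := by
      intro i hi
      obtain ⟨hil, hPi⟩ := mem_filter.1 hi
      have hil' := mem_Icc.1 hil
      exact mem_Ico.2 ⟨hil'.1, lt_of_not_ge fun hki => hPk (hP hk hil' hki hPi)⟩
    calc #{i ∈ Icc 1 l | P i} ≤ #(Ico 1 k) := card_le_card hsub
      _ = k - 1 := Nat.card_Ico 1 k
      _ < k := Nat.sub_one_lt_of_lt hk.1
  · intro hPk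
    have hsub : Icc 1 k ⊆ {i ∈ Icc 1 l | P i} := by
      intro i hi
      obtain ⟨h1i, hik⟩ := mem_Icc.1 hi
      have hil := hik.trans hk.2
      exact mem_filter.2 ⟨mem_Icc.2 ⟨h1i, hil⟩, hP ⟨h1i, hil⟩ hk hik hPk⟩
    simpa using card_le_card hsub

section Partition

variable {l : ℕ} {lam : ℕ → ℕ}

theorem conjPart_le (j : ℕ) : conjPart l lam j ≤ l := by
  simpa [conjPart] using card_filter_le (Icc 1 l) fun i => j ≤ lam i

theorem diagCount_le : diagCount l lam ≤ l := by
  simpa [diagCount] using card_filter_le (Icc 1 l) fun i => i ≤ lam i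

theorem antitone_conjPart : Antitone (conjPart l lam) := fun _ _ hij =>
  card_le_card (monotone_filter_right _ fun _ _ hj => hij.trans hj)

theorem strictAnti_diagLeg : StrictAnti (diagLeg l lam) := by
  intro i j hij
  have hconj : conjPart l lam j ≤ conjPart l lam i := antitone_conjPart hij.le
  unfold diagLeg
  omega

theorem strictMonoOn_diagGap {s : Set ℕ} (hlam : AntitoneOn lam s) :
    StrictMonoOn (diagGap lam) s := by
  intro i hi j hj hij
  have hle : lam j ≤ lam i := hlam hi hj hij.le
  unfold diagGap
  omega

theorem le_conjPart_iff (hlam : AntitoneOn lam (Set.Icc 1 l)) {k : ℕ} (hk : k ∈ Set.Icc 1 l)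
    (j : ℕ) : k ≤ conjPart l lam j ↔ j ≤ lam k :=
  le_card_filter_Icc_iff (P := fun i => j ≤ lam i)
    (fun _ ha _ hb hab hj => hj.trans (hlam ha hb hab)) hk

theorem le_diagCount_iff (hlam : AntitoneOn lam (Set.Icc 1 l)) {k : ℕ} (hk : k ∈ Set.Icc 1 l) :
    k ≤ diagCount l lam ↔ k ≤ lam k :=
  le_card_filter_Icc_iff (P := fun i => i ≤ lam i)
    (fun _ ha _ hb hab hj => hab.trans (hj.trans (hlam ha hb hab))) hk

theorem diagGap_ne_diagLeg (hlam : AntitoneOn lam (Set.Icc 1 l)) {k : ℕ}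
    (hk : k ∈ Set.Icc 1 l) (j : ℕ) : diagGap lam k ≠ diagLeg l lam j := by
  have hbox : k ≤ conjPart l lam j ↔ j ≤ lam k := le_conjPart_iff hlam hk j
  unfold diagGap diagLeg
  rcases le_or_gt j (lam k) with hj | hj <;> omega

theorem diagGap_mem_Icc (hlam : AntitoneOn lam (Set.Icc 1 l)) {k : ℕ}
    (hk : k ∈ Icc (diagCount l lam + 1) l) : diagGap lam k ∈ Icc (0 : ℤ) (l - 1) := by
  obtain ⟨hrk, hkl⟩ := mem_Icc.1 hk
  have hdiag : k ≤ diagCount l lam ↔ k ≤ lam k := le_diagCount_iff hlam ⟨by omega, hkl⟩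
  rw [mem_Icc]
  unfold diagGap
  omega

theorem diagLeg_mem_Icc (hlam : AntitoneOn lam (Set.Icc 1 l)) {j : ℕ}
    (hj : j ∈ Icc 1 (diagCount l lam)) : diagLeg l lam j ∈ Icc (0 : ℤ) (l - 1) := by
  obtain ⟨h1j, hjr⟩ := mem_Icc.1 hj
  have hjl : j ∈ Set.Icc 1 l := ⟨h1j, hjr.trans diagCount_le⟩
  have hdiag : j ≤ conjPart l lam j :=
    (le_conjPart_iff hlam hjl j).2 ((le_diagCount_iff hlam hjl).1 hjr)
  have hconj : conjPart l lam j ≤ l := conjPart_le j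
  rw [mem_Icc]
  unfold diagLeg
  omega

theorem card_image_diagGap (hlam : AntitoneOn lam (Set.Icc 1 l)) (n : ℕ) :
    #((Icc (n + 1) l).image (diagGap lam)) = l - n := by
  have hsub : Set.Icc (n + 1) l ⊆ Set.Icc 1 l :=
    Set.Icc_subset_Icc_left (Nat.le_add_left 1 _)
  have hinj : Set.InjOn (diagGap lam) (Icc (n + 1) l) := by
    rw [coe_Icc]
    exact (strictMonoOn_diagGap (hlam.mono hsub)).injOn
  rw [card_image_of_injOn hinj, Nat.card_Icc, Nat.add_sub_add_right]

theorem card_image_diagLeg (n : ℕ) : #((Icc 1 n).image (diagLeg l lam)) = n := by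
  rw [card_image_of_injective _ strictAnti_diagLeg.injective, Nat.card_Icc, Nat.add_sub_cancel]

theorem disjoint_image_diagGap_image_diagLeg (hlam : AntitoneOn lam (Set.Icc 1 l))
    {s t : Finset ℕ} (hs : s ⊆ Icc 1 l) :
    Disjoint (s.image (diagGap lam)) (t.image (diagLeg l lam)) := by
  simp only [disjoint_left, mem_image]
  rintro _ ⟨k, hk, rfl⟩ ⟨j, -, hjk⟩
  exact diagGap_ne_diagLeg hlam (mem_Icc.1 (hs hk)) j hjk.symm

theorem diag_hook_complement_general (hlam : AntitoneOn lam (Set.Icc 1 l)) :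
    let A := (Icc (diagCount l lam + 1) l).image (diagGap lam)
    let B := (Icc 1 (diagCount l lam)).image (diagLeg l lam)
    Disjoint A B ∧ A ∪ B = Icc (0 : ℤ) (l - 1) := by
  intro A B
  have hdisj : Disjoint A B :=
    disjoint_image_diagGap_image_diagLeg hlam (Icc_subset_Icc_left (Nat.le_add_left 1 _))
  have hsub : A ∪ B ⊆ Icc (0 : ℤ) (l - 1) :=
    union_subset (image_subset_iff.2 fun _ => diagGap_mem_Icc hlam)
      (image_subset_iff.2 fun _ => diagLeg_mem_Icc hlam)
  have hcard : #(A ∪ B) = #(Icc (0 : ℤ) (l - 1)) := by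
    calc #(A ∪ B) = #A + #B := card_union_of_disjoint hdisj
      _ = (l - diagCount l lam) + diagCount l lam := by
        rw [card_image_diagGap hlam, card_image_diagLeg]
      _ = l := Nat.sub_add_cancel diagCount_le
      _ = #(Icc (0 : ℤ) (l - 1)) := by simp
  exact ⟨hdisj, eq_of_subset_of_card_le hsub hcard.ge⟩

end Partition

/-- For a partition `λ_1 ≥ … ≥ λ_l > 0` (1-indexed via `lam`), with conjugate
`λ'_j = #{i : λ_i ≥ j}` and `r = #{i : λ_i ≥ i}` diagonal boxes, the sets
`{k - λ_k - 1 : r+1 ≤ k ≤ l}` and `{λ'_j - j : 1 ≤ j ≤ r}` are disjoint with union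
`{0, 1, …, l-1}`. -/
theorem diag_hook_complement (l : ℕ) (lam : ℕ → ℕ)
    (hanti : ∀ i j : ℕ, 1 ≤ i → i ≤ j → j ≤ l → lam j ≤ lam i)
    (hpos : ∀ i : ℕ, 1 ≤ i → i ≤ l → 0 < lam i) :
    let conj : ℕ → ℕ := fun j => ((Finset.Icc 1 l).filter fun i => j ≤ lam i).card
    let r : ℕ := ((Finset.Icc 1 l).filter fun i => i ≤ lam i).card
    let A : Finset ℤ := (Finset.Icc (r + 1) l).image fun k : ℕ => (k : ℤ) - (lam k : ℤ) - 1
    let B : Finset ℤ := (Finset.Icc 1 r).image fun j : ℕ => (conj j : ℤ) - (j : ℤ)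
    Disjoint A B ∧ A ∪ B = Finset.Icc (0 : ℤ) ((l : ℤ) - 1) := by
  exact diag_hook_complement_general fun i hi j hj hij => hanti i j hi.1 hij hj.2
end

section
/- Let R be a commutative ring, h : ℤ → R any sequence, and define h^{(0)}_i = h_i and h^{(r+1)}_i = h^{(r)}_{i+1} + h^{(r)}_{i−1} for r ≥ 0, i ∈ ℤ. Then for any l ≥ 1 and any integers m_1, …, m_l: det( h^{(j−1)}_{m_i} )_{1 ≤ i,j ≤ l} = det M, where M is the l×l matrix with M_{i,1} = h_{m_i} and M_{i,j} = h_{m_i + j − 1} + h_{m_i + 1 − j} for 2 ≤ j ≤ l. (Applied with m_i = λ_i − i + 1, this rewrites the generalized Jacobi–Trudy determinant in the Fulton–Harris form used for characters of the orthogonal and symplectic Lie algebras.) -/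
/-- `h^{(0)}_i = h_i`, `h^{(r+1)}_i = h^{(r)}_{i+1} + h^{(r)}_{i-1}`
(the specialization of the general recurrence to `a ≡ 0`, `b ≡ 1`). -/
def iterh {R : Type*} [CommRing R] (h : ℤ → R) : ℕ → ℤ → R
  | 0, i => h i
  | (r+1), i => iterh h r (i + 1) + iterh h r (i - 1)

/-!
Let `S` be the shift on sequences, so that `h^{(r)} = (S + S⁻¹) ^ r h`. The rescaled Chebyshev
polynomial `C n` satisfies `C n (S + S⁻¹) = S ^ n + S⁻¹ ^ n`, and it is monic of degree `n` for
`n ≥ 1`. Hence both matrices arise by applying the linear functionals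
`p ↦ (p (S + S⁻¹) h)_{m_i}` to a sequence of monic polynomials of degrees `0, 1, 2, …`, and any two
such sequences differ by a unitriangular change of basis.
-/

open Polynomial

theorem of_linearMap_apply_eq_mul_of_coeff {R ι : Type*} [CommSemiring R] {n : ℕ}
    (φ : ι → R[X] →ₗ[R] R) (p : Fin n → R[X]) (natDegree_le : ∀ j, (p j).natDegree ≤ j) :
    Matrix.of (fun i j => φ i (p j)) =
      Matrix.of (fun i (j : Fin n) => φ i (X ^ (j : ℕ))) *
        Matrix.of (fun i j : Fin n => (p j).coeff i) := by
  ext i j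
  have expand : p j = ∑ k : Fin n, (p j).coeff k • X ^ (k : ℕ) := by
    rw [Fin.sum_univ_eq_sum_range (fun k => (p j).coeff k • (X : R[X]) ^ k)]
    simpa only [smul_eq_C_mul] using
      (p j).as_sum_range_C_mul_X_pow' ((natDegree_le j).trans_lt j.is_lt)
  calc φ i (p j)
      = φ i (∑ k : Fin n, (p j).coeff k • X ^ (k : ℕ)) := congrArg (φ i) expand
    _ = ∑ k : Fin n, φ i (X ^ (k : ℕ)) * (p j).coeff k := by
      simp only [map_sum, map_smul, smul_eq_mul, mul_comm]

theorem det_linearMap_apply_eq_det_linearMap_apply_X_pow {R : Type*} [CommRing R] {n : ℕ}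
    (φ : Fin n → R[X] →ₗ[R] R) (p : Fin n → R[X]) (monic : ∀ j, IsMonicOfDegree (p j) j) :
    (Matrix.of fun i j => φ i (p j)).det =
      (Matrix.of fun i j : Fin n => φ i (X ^ (j : ℕ))).det := by
  rw [of_linearMap_apply_eq_mul_of_coeff φ p fun j => (monic j).natDegree_eq.le, Matrix.det_mul,
    Matrix.det_matrixOfPolynomials p (fun j => (monic j).natDegree_eq) (fun j => (monic j).monic),
    mul_one]

section FultonHarrisPoly

variable (R : Type*) [CommRing R]

theorem isMonicOfDegree_chebyshev_C_succ [Nontrivial R] (n : ℕ) :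
    IsMonicOfDegree (Chebyshev.C R (n + 1)) (n + 1) := by
  induction n using Nat.twoStepInduction with
  | zero => simpa using isMonicOfDegree_X R
  | one =>
    have natDegree_two : (2 : R[X]).natDegree < 2 := by simp
    rw [Nat.cast_one, one_add_one_eq_two, Chebyshev.C_two]
    exact (isMonicOfDegree_X_pow R 2).sub natDegree_two
  | more n ih ih' =>
    have recurrence : Chebyshev.C R ((n + 2 : ℕ) + 1) =
        X * Chebyshev.C R ((n + 1 : ℕ) + 1) - Chebyshev.C R (n + 1) := by
      exact_mod_cast Chebyshev.C_add_two R (n + 1)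
    have leading : IsMonicOfDegree (X * Chebyshev.C R ((n + 1 : ℕ) + 1)) (n + 2 + 1) := by
      simpa only [add_comm 1] using (isMonicOfDegree_X R).mul ih'
    rw [recurrence]
    exact leading.sub (ih.natDegree_eq.trans_lt (by omega))

/-- The rescaled Chebyshev polynomials `C n`, except that `C 0 = 2` is replaced by `1` to make
every member monic. They produce the columns of the Fulton–Harris determinant. -/
noncomputable def fultonHarrisPoly : ℕ → R[X]
  | 0 => 1
  | n + 1 => Chebyshev.C R (n + 1)

theorem isMonicOfDegree_fultonHarrisPoly [Nontrivial R] :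
    ∀ n, IsMonicOfDegree (fultonHarrisPoly R n) n
  | 0 => isMonicOfDegree_zero_iff.mpr rfl
  | n + 1 => isMonicOfDegree_chebyshev_C_succ R n

end FultonHarrisPoly

section NeighborSum

variable (R : Type*) [CommRing R] {M : Type*} [AddCommGroup M] [Module R M]

/-- The operator `S + S⁻¹` on two-sided sequences, where `S` is the shift. -/
def neighborSum : Module.End R (ℤ → M) where
  toFun h x := h (x + 1) + h (x - 1)
  map_add' g h := by ext x; simp only [Pi.add_apply]; abel
  map_smul' c h := by ext x; simp only [Pi.smul_apply, smul_add, RingHom.id_apply]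

theorem neighborSum_apply (h : ℤ → M) (x : ℤ) : neighborSum R h x = h (x + 1) + h (x - 1) :=
  rfl

theorem aeval_neighborSum_chebyshev_C_apply (n : ℤ) (h : ℤ → M) (x : ℤ) :
    aeval (neighborSum R) (Chebyshev.C R n) h x = h (x + n) + h (x - n) := by
  induction n using Chebyshev.induct' generalizing x with
  | zero => simp [map_ofNat, two_smul]
  | one => simp [neighborSum_apply]
  | add_two n ih ih' =>
    rw [Chebyshev.C_add_two, map_sub, map_mul, aeval_X, LinearMap.sub_apply, Module.End.mul_apply,
      Pi.sub_apply, neighborSum_apply, ih, ih, ih']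
    rw [show x + 1 + ((n : ℤ) + 1) = x + (n + 2) by ring,
      show x + 1 - ((n : ℤ) + 1) = x - n by ring,
      show x - 1 + ((n : ℤ) + 1) = x + n by ring, show x - 1 - ((n : ℤ) + 1) = x - (n + 2) by ring]
    abel
  | neg n ih => rw [Chebyshev.C_neg, ih, sub_neg_eq_add, ← sub_eq_add_neg, add_comm]

variable {R}

theorem iterh_eq_neighborSum_pow_apply (h : ℤ → R) (r : ℕ) :
    iterh h r = (neighborSum R ^ r) h := by
  induction r with
  | zero => rfl
  | succ r ih => rw [pow_succ', Module.End.mul_apply, ← ih]; rfl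

/-- The linear functional `p ↦ (p (S + S⁻¹) h) x` on polynomials, where `S` is the shift. It sends
`X ^ r` to `h^{(r)}_x`. -/
noncomputable def neighborSumFunctional (h : ℤ → R) (x : ℤ) : R[X] →ₗ[R] R :=
  LinearMap.proj x ∘ₗ LinearMap.applyₗ h ∘ₗ (aeval (neighborSum R)).toLinearMap

theorem neighborSumFunctional_apply (h : ℤ → R) (x : ℤ) (p : R[X]) :
    neighborSumFunctional h x p = aeval (neighborSum R) p h x :=
  rfl

theorem neighborSumFunctional_X_pow (h : ℤ → R) (x : ℤ) (r : ℕ) :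
    neighborSumFunctional h x (X ^ r) = iterh h r x := by
  rw [neighborSumFunctional_apply, aeval_X_pow, iterh_eq_neighborSum_pow_apply]

theorem neighborSumFunctional_fultonHarrisPoly (h : ℤ → R) (x : ℤ) (n : ℕ) :
    neighborSumFunctional h x (fultonHarrisPoly R n) =
      if n = 0 then h x else h (x + n) + h (x - n) := by
  cases n with
  | zero => simp [neighborSumFunctional_apply, fultonHarrisPoly]
  | succ n =>
    rw [if_neg n.succ_ne_zero, neighborSumFunctional_apply, fultonHarrisPoly,
      aeval_neighborSum_chebyshev_C_apply, Nat.cast_succ]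

end NeighborSum

/-- The Jacobi–Trudy determinant `det(h^{(j-1)}_{m_i})` equals the Fulton–Harris form:
the determinant of the matrix whose first column is `h_{m_i}` and whose `j`-th column,
for `2 ≤ j ≤ l`, is `h_{m_i + j - 1} + h_{m_i + 1 - j}`. -/
theorem iterh_det_fulton_harris (R : Type*) [CommRing R] (h : ℤ → R) (l : ℕ) (hl : 1 ≤ l)
    (m : Fin l → ℤ) :
    Matrix.det (Matrix.of fun i j : Fin l => iterh h (j : ℕ) (m i)) =
      Matrix.det (Matrix.of fun i j : Fin l =>
        if (j : ℕ) = 0 then h (m i)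
        else h (m i + (j : ℕ)) + h (m i - (j : ℕ))) := by
  nontriviality R
  simp only [← neighborSumFunctional_X_pow, ← neighborSumFunctional_fultonHarrisPoly]
  exact (det_linearMap_apply_eq_det_linearMap_apply_X_pow (fun i => neighborSumFunctional h (m i))
    (fun j => fultonHarrisPoly R j) fun j => isMonicOfDegree_fultonHarrisPoly R j).symm
end
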